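/- arXiv:1602.02146 — 3 statements merged into one kernel-verified Lean document; each statement's English description precedes it below -/
import Mathlib

section
/- If f, g ∈ PL(I) and x ∈ [0,1] satisfies f(x) = x and g(x) = x, then there is a neighborhood of x in [0,1] on which the commutator f g f⁻¹ g⁻¹ is the identity. -/
/-- The unit interval `[0,1]`. -/
abbrev UnitInt : Type := Set.Icc (0 : ℝ) 1

/-- `f` is an orientation-preserving piecewise linear homeomorphism of `[0,1]`:
it is strictly increasing and there is a finite partition `0 = t 0 < t 1 < ⋯ < t k = 1`
such that `f` is affine on each subinterval `[t i, t (i+1)]`. -/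
def IsPLHomeo (f : Homeomorph UnitInt UnitInt) : Prop :=
  StrictMono f ∧
    ∃ (k : ℕ) (t : Fin (k + 1) → ℝ), t 0 = 0 ∧ t (Fin.last k) = 1 ∧ StrictMono t ∧
      ∀ i : Fin k, ∃ a b : ℝ, ∀ x : UnitInt,
        (x : ℝ) ∈ Set.Icc (t i.castSucc) (t i.succ) → (f x : ℝ) = a * (x : ℝ) + b

/-!
On each side of a common fixed point, `f` and `g` are germs of affine maps of the line, and affine
maps of the line with a common fixed point commute. Monotone maps preserve the two sides, so
`f ∘ g = g ∘ f` near the fixed point, that is, the commutator is the identity there.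
-/

open Filter Set Topology

section EventuallyAffine

variable {R : Type*} [CommRing R] {s : Set R} {f g : s → s} {p : s} {l : Filter s}

/-- The self-map `f` of `s ⊆ R` agrees with an affine map of the line `R` along the filter `l`.
With `l` one of `𝓝[≤] p` and `𝓝[≥] p`, this expresses that a one-sided germ of `f` is affine. -/
def EventuallyAffine (f : s → s) (l : Filter s) : Prop :=
  ∃ a b : R, ∀ᶠ y in l, (f y : R) = a * y + b

theorem eventuallyAffine_pure (f : s → s) (p : s) : EventuallyAffine f (pure p) :=
  ⟨0, f p, by simp⟩

theorem EventuallyAffine.comp_eventuallyEq_comp (hf : EventuallyAffine f l)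
    (hg : EventuallyAffine g l) (hfl : Tendsto f l l) (hgl : Tendsto g l l)
    (hpl : pure p ≤ l) (hfp : f p = p) (hgp : g p = p) : f ∘ g =ᶠ[l] g ∘ f := by
  obtain ⟨a, b, hab⟩ := hf
  obtain ⟨c, d, hcd⟩ := hg
  have hp_f : (p : R) = a * p + b := by simpa only [hfp] using eventually_pure.1 (hpl hab)
  have hp_g : (p : R) = c * p + d := by simpa only [hgp] using eventually_pure.1 (hpl hcd)
  filter_upwards [hab, hcd, hgl.eventually hab, hfl.eventually hcd] with y hfy hgy hfgy hgfy
  apply Subtype.ext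
  calc (f (g y) : R) = a * (c * y + d) + b := by rw [hfgy, hgy]
    _ = c * (a * y + b) + d := by linear_combination (c - 1) * hp_f - (a - 1) * hp_g
    _ = g (f y) := by rw [hgfy, hfy]

end EventuallyAffine

section Topology

variable {X Y : Type*} [TopologicalSpace X] [TopologicalSpace Y]

theorem tendsto_nhdsLE_of_monotone [Preorder X] [Preorder Y] {f : X → Y} {p : X}
    (hf : Monotone f) (hfp : ContinuousAt f p) : Tendsto f (𝓝[≤] p) (𝓝[≤] (f p)) :=
  hfp.continuousWithinAt.tendsto_nhdsWithin hf.mapsTo_Iic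

theorem tendsto_nhdsGE_of_monotone [Preorder X] [Preorder Y] {f : X → Y} {p : X}
    (hf : Monotone f) (hfp : ContinuousAt f p) : Tendsto f (𝓝[≥] p) (𝓝[≥] (f p)) :=
  hfp.continuousWithinAt.tendsto_nhdsWithin hf.mapsTo_Ici

theorem eventually_commutator_apply_eq_self {f g : X ≃ₜ X} {p : X} (hfp : f p = p) (hgp : g p = p)
    (hfg : f ∘ g =ᶠ[𝓝 p] g ∘ f) : ∀ᶠ z in 𝓝 p, f (g (f.symm (g.symm z))) = z := by
  have hp : f.symm (g.symm p) = p := by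
    rw [g.symm_apply_eq.2 hgp.symm, f.symm_apply_eq.2 hfp.symm]
  have hsymm : Tendsto (fun z ↦ f.symm (g.symm z)) (𝓝 p) (𝓝 p) :=
    (f.symm.continuous.comp g.symm.continuous).tendsto' p p hp
  filter_upwards [hsymm.eventually hfg] with z hz
  calc f (g (f.symm (g.symm z))) = g (f (f.symm (g.symm z))) := hz
    _ = z := by rw [f.apply_symm_apply, g.apply_symm_apply]

end Topology

theorem plI_commutator_eventually_id_of_fixed_general {R : Type*} [CommRing R] [LinearOrder R]
    [TopologicalSpace R] {s : Set R} {f g : s ≃ₜ s} {p : s} (hf : Monotone f) (hg : Monotone g)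
    (hf_le : EventuallyAffine f (𝓝[≤] p)) (hf_ge : EventuallyAffine f (𝓝[≥] p))
    (hg_le : EventuallyAffine g (𝓝[≤] p)) (hg_ge : EventuallyAffine g (𝓝[≥] p))
    (hfp : f p = p) (hgp : g p = p) :
    ∀ᶠ z in 𝓝 p, f (g (f.symm (g.symm z))) = z := by
  have hfc : ContinuousAt f p := f.continuous.continuousAt
  have hgc : ContinuousAt g p := g.continuous.continuousAt
  have comm_le : f ∘ g =ᶠ[𝓝[≤] p] g ∘ f :=
    hf_le.comp_eventuallyEq_comp hg_le
      (by simpa only [hfp] using tendsto_nhdsLE_of_monotone hf hfc)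
      (by simpa only [hgp] using tendsto_nhdsLE_of_monotone hg hgc)
      (pure_le_nhdsWithin self_mem_Iic) hfp hgp
  have comm_ge : f ∘ g =ᶠ[𝓝[≥] p] g ∘ f :=
    hf_ge.comp_eventuallyEq_comp hg_ge
      (by simpa only [hfp] using tendsto_nhdsGE_of_monotone hf hfc)
      (by simpa only [hgp] using tendsto_nhdsGE_of_monotone hg hgc)
      (pure_le_nhdsWithin self_mem_Ici) hfp hgp
  have comm : f ∘ g =ᶠ[𝓝 p] g ∘ f := by
    rw [← nhdsLE_sup_nhdsGE]
    exact eventually_sup.2 ⟨comm_le, comm_ge⟩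
  exact eventually_commutator_apply_eq_self hfp hgp comm

theorem exists_castSucc_and_not_succ {k : ℕ} {P : Fin (k + 1) → Prop} (h_zero : P 0)
    (h_last : ¬ P (Fin.last k)) : ∃ i : Fin k, P i.castSucc ∧ ¬ P i.succ := by
  by_contra! h_succ
  exact h_last (Fin.induction h_zero h_succ (Fin.last k))

namespace IsPLHomeo

variable {f : UnitInt ≃ₜ UnitInt}

theorem eventuallyAffine_nhdsLE (hf : IsPLHomeo f) (x : UnitInt) :
    EventuallyAffine f (𝓝[≤] x) := by
  obtain ⟨-, k, t, ht_zero, ht_last, -, ht_affine⟩ := hf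
  rcases eq_bot_or_bot_lt x with rfl | hx
  · rw [Iic_bot, nhdsWithin_singleton]
    exact eventuallyAffine_pure f ⊥
  · obtain ⟨i, hi_lt, hi_ge⟩ := exists_castSucc_and_not_succ (P := (t · < x))
      (ht_zero.trans_lt hx) (x.2.2.trans_eq ht_last.symm).not_gt
    have hmem : ∀ᶠ y : UnitInt in 𝓝[≤] x, (y : ℝ) ∈ Icc (t i.castSucc) (t i.succ) :=
      (tendsto_nhdsLE_of_monotone (Subtype.mono_coe _) continuousAt_subtype_val).eventually
        (Icc_mem_nhdsLE_of_mem ⟨hi_lt, not_lt.1 hi_ge⟩)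
    obtain ⟨a, b, hab⟩ := ht_affine i
    exact ⟨a, b, hmem.mono hab⟩

theorem eventuallyAffine_nhdsGE (hf : IsPLHomeo f) (x : UnitInt) :
    EventuallyAffine f (𝓝[≥] x) := by
  obtain ⟨-, k, t, ht_zero, ht_last, -, ht_affine⟩ := hf
  rcases eq_top_or_lt_top x with rfl | hx
  · rw [Ici_top, nhdsWithin_singleton]
    exact eventuallyAffine_pure f ⊤
  · obtain ⟨i, hi_le, hi_gt⟩ := exists_castSucc_and_not_succ (P := (t · ≤ x))
      (ht_zero.trans_le x.2.1) (not_le.2 (lt_of_lt_of_eq hx ht_last.symm))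
    have hmem : ∀ᶠ y : UnitInt in 𝓝[≥] x, (y : ℝ) ∈ Icc (t i.castSucc) (t i.succ) :=
      (tendsto_nhdsGE_of_monotone (Subtype.mono_coe _) continuousAt_subtype_val).eventually
        (Icc_mem_nhdsGE_of_mem ⟨hi_le, not_le.1 hi_gt⟩)
    obtain ⟨a, b, hab⟩ := ht_affine i
    exact ⟨a, b, hmem.mono hab⟩

end IsPLHomeo

/-- If `f, g ∈ PL(I)` both fix a point `x ∈ [0,1]`, then the commutator `f g f⁻¹ g⁻¹` is
the identity on a neighborhood of `x` in `[0,1]`. -/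
theorem plI_commutator_eventually_id_of_fixed
    (f g : Homeomorph UnitInt UnitInt) (hf : IsPLHomeo f) (hg : IsPLHomeo g)
    (x : UnitInt) (hfx : f x = x) (hgx : g x = x) :
    ∃ V ∈ nhds x, ∀ z ∈ V, f (g (f.symm (g.symm z))) = z :=
  (plI_commutator_eventually_id_of_fixed_general hf.1.monotone hg.1.monotone
    (hf.eventuallyAffine_nhdsLE x) (hf.eventuallyAffine_nhdsGE x)
    (hg.eventuallyAffine_nhdsLE x) (hg.eventuallyAffine_nhdsGE x) hfx hgx).exists_mem
end

section
/- Let A be a topological manifold (in particular a regular Hausdorff space), let B be a topological space, and let f be a homeomorphism of A × B. Then f({a} × B) = {a} × B holds for every a ∈ A if and only if f(cl(U × B)) ⊆ cl(U × B) holds for every open set U ⊆ A, where cl denotes closure in A × B. -/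
/-!
Both conditions say that `f` commutes with the projection `π` to the base. For the fibers this
is set theory. For closures, `π` being open and continuous gives `cl (π⁻¹ U) = π⁻¹ (cl U)`; if
`π (f x) ≠ π x`, then the Hausdorff property provides an open `U ∋ π x` whose closure misses
`π (f x)`, so `f` does not preserve `cl (π⁻¹ U)`.
-/

theorem forall_image_fiber_eq_iff {X A : Type*} {π : X → A} {f : X → X} :
    (∀ a, f '' (π ⁻¹' {a}) = π ⁻¹' {a}) ↔ Function.Surjective f ∧ ∀ x, π (f x) = π x := by
  constructor
  · intro image_fiber
    constructor
    · intro y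
      have mem_image : y ∈ f '' (π ⁻¹' {π y}) := (image_fiber (π y)).ge rfl
      exact Set.mem_range_of_mem_image f _ mem_image
    · intro x
      exact (image_fiber (π x)).le (Set.mem_image_of_mem f rfl)
  · rintro ⟨surjective_f, proj_apply⟩ a
    have preimage_fiber : f ⁻¹' (π ⁻¹' {a}) = π ⁻¹' {a} := by
      ext x
      simp only [Set.mem_preimage, proj_apply]
    calc
      f '' (π ⁻¹' {a}) = f '' (f ⁻¹' (π ⁻¹' {a})) := by rw [preimage_fiber]
      _ = π ⁻¹' {a} := Set.image_preimage_eq _ surjective_f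

theorem eq_of_forall_isOpen_mem_closure {A : Type*} [TopologicalSpace A] [T2Space A] {x y : A}
    (h : ∀ U : Set A, IsOpen U → x ∈ U → y ∈ closure U) : y = x := by
  by_contra y_ne_x
  obtain ⟨V, U, isOpen_V, isOpen_U, y_mem_V, x_mem_U, disjoint_V_U⟩ := t2_separation y_ne_x
  have disjoint_V_closure_U : Disjoint V (closure U) := disjoint_V_U.closure_right isOpen_V
  exact disjoint_V_closure_U.notMem_of_mem_left y_mem_V (h U isOpen_U x_mem_U)

theorem forall_image_preimage_closure_subset_iff {X A : Type*} [TopologicalSpace A] [T2Space A]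
    {π : X → A} {f : X → X} :
    (∀ U : Set A, IsOpen U → f '' (π ⁻¹' closure U) ⊆ π ⁻¹' closure U) ↔
      ∀ x, π (f x) = π x := by
  constructor
  · intro image_subset x
    refine eq_of_forall_isOpen_mem_closure fun U isOpen_U mem_U => ?_
    exact image_subset U isOpen_U (Set.mem_image_of_mem f (subset_closure mem_U))
  · rintro proj_apply U - _ ⟨x, mem_closure, rfl⟩
    rwa [Set.mem_preimage, proj_apply]

theorem fiber_preserving_iff_closure_invariant_general {X A : Type*} [TopologicalSpace X]
    [TopologicalSpace A] [T2Space A] {π : X → A} (isOpenMap_π : IsOpenMap π)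
    (continuous_π : Continuous π) {f : X → X} (surjective_f : Function.Surjective f) :
    (∀ a, f '' (π ⁻¹' {a}) = π ⁻¹' {a}) ↔
      ∀ U : Set A, IsOpen U → f '' closure (π ⁻¹' U) ⊆ closure (π ⁻¹' U) := by
  simp only [← isOpenMap_π.preimage_closure_eq_closure_preimage continuous_π]
  rw [forall_image_fiber_eq_iff, forall_image_preimage_closure_subset_iff,
    and_iff_right surjective_f]

/-- Let `A` be a topological manifold, `B` a topological space, and `f` a homeomorphism of
`A × B`.  Then `f({a} × B) = {a} × B` for every `a ∈ A` if and only if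
`f(cl(U × B)) ⊆ cl(U × B)` for every open `U ⊆ A`. -/
theorem fiber_preserving_iff_closure_invariant
    {n : ℕ} {A B : Type*} [TopologicalSpace A] [TopologicalSpace B]
    [T2Space A] [ChartedSpace (EuclideanSpace ℝ (Fin n)) A]
    (f : Homeomorph (A × B) (A × B)) :
    (∀ a : A, ⇑f '' ({a} ×ˢ (Set.univ : Set B)) = {a} ×ˢ (Set.univ : Set B)) ↔
      ∀ U : Set A, IsOpen U →
        ⇑f '' closure (U ×ˢ (Set.univ : Set B)) ⊆ closure (U ×ˢ (Set.univ : Set B)) := by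
  simpa only [Set.prod_univ] using
    fiber_preserving_iff_closure_invariant_general isOpenMap_fst continuous_fst f.surjective
end

section
/- For every n ≥ 1, every nonempty open set U ⊆ [0,1]ⁿ, and every point y = (x, t) ∈ U with vertical coordinate t ∈ (0,1), the set {f(y) : f ∈ PL(Iⁿ, F) and f(z) = z for all z ∉ U} is uncountable. -/
/-- The unit cube `[0,1]ⁿ`. -/
abbrev Cube (n : ℕ) : Type := Set.Icc (0 : Fin n → ℝ) 1

/-- `f` is an orientation-preserving piecewise linear homeomorphism of the cube `[0,1]ⁿ`:
there is a finite family of `n`-dimensional affine simplices (convex hulls of `n + 1`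
affinely independent points) with pairwise disjoint interiors whose union is `[0,1]ⁿ`,
such that on each simplex `f` agrees with an affine map of `ℝⁿ` whose linear part has
positive determinant. -/
def IsPLCubeHomeo {n : ℕ} (f : Homeomorph (Cube n) (Cube n)) : Prop :=
  ∃ (k : ℕ) (p : Fin k → Fin (n + 1) → Fin n → ℝ)
    (A : Fin k → ((Fin n → ℝ) →ᵃ[ℝ] (Fin n → ℝ))),
      (∀ i, AffineIndependent ℝ (p i)) ∧
      (∀ i j, i ≠ j →
        interior (convexHull ℝ (Set.range (p i))) ∩
          interior (convexHull ℝ (Set.range (p j))) = ∅) ∧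
      (⋃ i, convexHull ℝ (Set.range (p i))) = Set.Icc (0 : Fin n → ℝ) 1 ∧
      (∀ i, 0 < LinearMap.det (A i).linear) ∧
      (∀ i, ∀ x : Cube n, (x : Fin n → ℝ) ∈ convexHull ℝ (Set.range (p i)) →
        (f x : Fin n → ℝ) = A i (x : Fin n → ℝ))

/-- Identifying `[0,1]ⁿ = [0,1]ⁿ⁻¹ × [0,1]`, the vertical line over the point whose first
`n - 1` coordinates are those of `c`: all points of the cube agreeing with `c` in every
coordinate except the last one. -/
def VertLine {n : ℕ} (c : Fin n → ℝ) : Set (Cube n) :=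
  {z | ∀ i : Fin n, (i : ℕ) + 1 < n → (z : Fin n → ℝ) i = c i}

/-!
Balls of the sup metric are cubes, so `φ x = s * max 0 (ε - dist x y)` is piecewise affine. It is
`s`-Lipschitz and vanishes off the `ε`-ball at `y`; for `s < 1` the map `x ↦ x + φ x • e`, with `e`
the last basis vector, is a contractive perturbation of the identity. It is therefore a
homeomorphism, and as its slope along `e` is at least `1 - s` on each piece it preserves
orientation. It moves `y` up by `s * ε`, and `s` ranges over an interval.

A simplex is cut along the zero set of an affine function `l` by repeated starring: coning from a
zero of `l` on an edge with endpoints of opposite signs leaves fewer vertices off the zero set. In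
this way maxima of piecewise affine functions are again piecewise affine on simplices, and a bounded
polytope, cut out of a large simplex, is a union of simplices.
-/

open Set Module
open scoped NNReal

section UpdateVertex

variable {ι k V P : Type*} [DecidableEq ι] [Field k] [AddCommGroup V] [Module k V]
  [AddTorsor V P] (b : AffineBasis ι k P) (i : ι) (x : P)

theorem toMatrix_update_eq_updateRow :
    b.toMatrix (Function.update b i x) = Matrix.updateRow 1 i (b.coords x) := by
  ext j m
  obtain rfl | hj := eq_or_ne j i
  · simp [AffineBasis.toMatrix_apply]
  · simp [AffineBasis.toMatrix_apply, hj, AffineBasis.coord_apply, Matrix.one_apply, eq_comm]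

variable [Fintype ι]

theorem det_toMatrix_update : (b.toMatrix (Function.update b i x)).det = b.coord i x := by
  rw [toMatrix_update_eq_updateRow, ← Matrix.cramer_transpose_apply, Matrix.transpose_one,
    Matrix.cramer_one]
  simp

variable {b i x}

theorem isUnit_toMatrix_update (hx : b.coord i x ≠ 0) :
    IsUnit (b.toMatrix (Function.update b i x)) := by
  rw [Matrix.isUnit_iff_isUnit_det, det_toMatrix_update]
  exact hx.isUnit

/-- The affine basis obtained from `b` by moving its `i`-th vertex to `x`. For `x` in the simplex
spanned by `b`, these are the top-dimensional pieces of the starring of that simplex at `x`. -/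
@[simps]
def updateVertex (hx : b.coord i x ≠ 0) : AffineBasis ι k P where
  toFun := Function.update b i x
  ind' := ((b.isUnit_toMatrix_iff _).1 (isUnit_toMatrix_update hx)).1
  tot' := ((b.isUnit_toMatrix_iff _).1 (isUnit_toMatrix_update hx)).2

theorem coord_updateVertex_self (hx : b.coord i x ≠ 0) (z : P) :
    (updateVertex hx).coord i z = b.coord i z / b.coord i x := by
  suffices (updateVertex hx).coord i = (b.coord i x)⁻¹ • b.coord i by
    simp [this, div_eq_inv_mul]
  refine AffineMap.ext_on (updateVertex hx).tot (forall_mem_range.2 fun j => ?_)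
  rw [AffineBasis.coord_apply]
  obtain rfl | hj := eq_or_ne j i
  · simp [hx]
  · simp [hj, hj.symm]

theorem coord_updateVertex_of_ne (hx : b.coord i x ≠ 0) {j : ι} (hj : j ≠ i) (z : P) :
    (updateVertex hx).coord j z = b.coord j z - b.coord j x * (b.coord i z / b.coord i x) := by
  suffices (updateVertex hx).coord j =
      b.coord j - (b.coord j x * (b.coord i x)⁻¹) • b.coord i by
    simp [this, div_eq_inv_mul, mul_assoc]
  refine AffineMap.ext_on (updateVertex hx).tot (forall_mem_range.2 fun m => ?_)
  rw [AffineBasis.coord_apply]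
  obtain rfl | hm := eq_or_ne m i
  · simp [hx, hj]
  · simp [hm, hm.symm, AffineBasis.coord_apply]

end UpdateVertex

/-- `f` does not change sign on `S`; zeros are allowed, so that a simplex may touch the hyperplane
along which it has been cut off. -/
def HasConstSignOn {X : Type*} (f : X → ℝ) (S : Set X) : Prop :=
  (∀ x ∈ S, 0 ≤ f x) ∨ ∀ x ∈ S, f x ≤ 0

theorem HasConstSignOn.mono {X : Type*} {f : X → ℝ} {S S' : Set X} (hf : HasConstSignOn f S)
    (hS : S' ⊆ S) : HasConstSignOn f S' :=
  hf.imp (fun h x hx => h x (hS hx)) fun h x hx => h x (hS hx)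

section Dissection

variable {ι E : Type*} [NormedAddCommGroup E] [NormedSpace ℝ E]

/-- The solid simplex whose vertices are the points of an affine basis. -/
abbrev simplexHull (b : AffineBasis ι ℝ E) : Set E := convexHull ℝ (range b)

/-- `S` has a finite dissection into top-dimensional simplices, each of which satisfies `P`: the
simplices cover `S` and have pairwise disjoint interiors. A simplex is encoded by the affine basis
of its vertices, and no compatibility between the faces of neighbouring simplices is required. -/
def HasDissection (S : Set E) (P : AffineBasis ι ℝ E → Prop) : Prop :=
  ∃ T : Set (AffineBasis ι ℝ E), T.Finite ∧ (∀ b ∈ T, P b) ∧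
    T.PairwiseDisjoint (fun b => interior (simplexHull b)) ∧ ⋃ b ∈ T, simplexHull b = S

theorem HasDissection.of_self {P : AffineBasis ι ℝ E → Prop} {b : AffineBasis ι ℝ E} (hb : P b) :
    HasDissection (simplexHull b) P :=
  ⟨{b}, finite_singleton b, by simpa using hb, pairwiseDisjoint_singleton _ _, by simp⟩

theorem HasDissection.bind {S : Set E} {P Q : AffineBasis ι ℝ E → Prop} (hS : HasDissection S P)
    (hPQ : ∀ b, P b → simplexHull b ⊆ S → HasDissection (simplexHull b) Q) :
    HasDissection S Q := by
  obtain ⟨T, hfin, hP, hdisj, rfl⟩ := hS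
  have hpieces : ∀ b ∈ T, HasDissection (simplexHull b) Q := fun b hb =>
    hPQ b (hP b hb) (subset_biUnion_of_mem (u := simplexHull) hb)
  choose! R hRfin hRQ hRdisj hRunion using hpieces
  have hsub : ∀ b ∈ T, ∀ c ∈ R b, simplexHull c ⊆ simplexHull b := fun b hb c hc =>
    hRunion b hb ▸ subset_biUnion_of_mem (u := simplexHull) hc
  refine ⟨⋃ b ∈ T, R b, hfin.biUnion hRfin, fun c hc => ?_, ?_, ?_⟩
  · obtain ⟨b, hb, hcb⟩ := mem_iUnion₂.1 hc
    exact hRQ b hb c hcb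
  · intro c hc d hd hcd
    obtain ⟨b, hb, hcb⟩ := mem_iUnion₂.1 hc
    obtain ⟨b', hb', hdb'⟩ := mem_iUnion₂.1 hd
    obtain rfl | hbb' := eq_or_ne b b'
    · exact hRdisj b hb hcb hdb' hcd
    · exact (hdisj hb hb' hbb').mono (interior_mono (hsub b hb c hcb))
        (interior_mono (hsub b' hb' d hdb'))
  · simp_rw [biUnion_iUnion]
    exact iUnion₂_congr hRunion

theorem HasDissection.mono {S : Set E} {P Q : AffineBasis ι ℝ E → Prop} (hS : HasDissection S P)
    (hPQ : ∀ b, P b → Q b) : HasDissection S Q :=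
  hS.bind fun b hb _ => .of_self (hPQ b hb)

theorem mem_simplexHull_iff {b : AffineBasis ι ℝ E} {z : E} :
    z ∈ simplexHull b ↔ ∀ i, 0 ≤ b.coord i z := by
  simp [simplexHull, AffineBasis.convexHull_eq_nonneg_coord]

section Starring

variable [Fintype ι] [DecidableEq ι] {b : AffineBasis ι ℝ E} {i : ι} {x z : E}

theorem simplexHull_updateVertex_subset (hx : x ∈ simplexHull b) (hi : b.coord i x ≠ 0) :
    simplexHull (updateVertex hi) ⊆ simplexHull b := by
  refine convexHull_min (forall_mem_range.2 fun j => ?_) (convex_convexHull ℝ _)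
  obtain rfl | hj := eq_or_ne j i
  · simpa using hx
  · simpa [hj] using subset_convexHull ℝ _ (mem_range_self j)

theorem mem_simplexHull_updateVertex (hx : x ∈ simplexHull b) (hi : b.coord i x ≠ 0)
    (hz : z ∈ simplexHull b)
    (hmin : ∀ j, b.coord j x ≠ 0 → b.coord i z / b.coord i x ≤ b.coord j z / b.coord j x) :
    z ∈ simplexHull (updateVertex hi) := by
  rw [mem_simplexHull_iff] at hx hz ⊢
  intro j
  obtain rfl | hj := eq_or_ne j i
  · rw [coord_updateVertex_self]
    exact div_nonneg (hz j) (hx j)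
  · rw [coord_updateVertex_of_ne hi hj, sub_nonneg]
    obtain h0 | h0 := (hx j).eq_or_lt
    · simpa [← h0] using hz j
    · exact (le_div_iff₀' h0).1 (hmin j h0.ne')

theorem coord_div_lt_of_mem_interior_updateVertex (hi : b.coord i x ≠ 0) {j : ι} (hij : i ≠ j)
    (hj : 0 < b.coord j x) (hz : z ∈ interior (simplexHull (updateVertex hi))) :
    b.coord i z / b.coord i x < b.coord j z / b.coord j x := by
  rw [AffineBasis.interior_convexHull] at hz
  have hpos := hz j
  rw [coord_updateVertex_of_ne hi hij.symm, sub_pos] at hpos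
  exact (lt_div_iff₀' hj).2 hpos

/-- A point `z` of the simplex lies in the piece whose moved vertex minimises the ratio of the
barycentric coordinates of `z` and `x`. -/
theorem HasDissection.starring {P : AffineBasis ι ℝ E → Prop} (hx : x ∈ simplexHull b)
    (hP : ∀ i (hi : b.coord i x ≠ 0), P (updateVertex hi)) :
    HasDissection (simplexHull b) P := by
  have hpos : ∀ i, b.coord i x ≠ 0 → 0 < b.coord i x := fun i hi =>
    (mem_simplexHull_iff.1 hx i).lt_of_ne' hi
  refine ⟨range fun i : {i // b.coord i x ≠ 0} => updateVertex i.2, finite_range _,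
    forall_mem_range.2 fun i => hP i i.2, ?_, ?_⟩
  · rintro _ ⟨i, rfl⟩ _ ⟨j, rfl⟩ hij
    have hij' : (i : ι) ≠ j := fun h => hij (by rw [Subtype.ext h])
    refine Set.disjoint_left.2 fun z hzi hzj => ?_
    exact lt_asymm
      (coord_div_lt_of_mem_interior_updateVertex i.2 hij' (hpos j j.2) hzi)
      (coord_div_lt_of_mem_interior_updateVertex j.2 hij'.symm (hpos i i.2) hzj)
  · rw [biUnion_range]
    refine (iUnion_subset fun i => simplexHull_updateVertex_subset hx i.2).antisymm fun z hz => ?_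
    have hne : ∃ i, b.coord i x ≠ 0 := by
      by_contra! h0
      simpa [h0] using b.sum_coord_apply_eq_one x
    obtain ⟨i₀, hi₀⟩ := hne
    obtain ⟨i, hi, hmin⟩ := Finset.exists_min_image {i | b.coord i x ≠ 0}
      (fun i => b.coord i z / b.coord i x) ⟨i₀, by simpa using hi₀⟩
    simp only [Finset.mem_filter_univ] at hi hmin
    exact mem_iUnion.2 ⟨⟨i, hi⟩, mem_simplexHull_updateVertex hx hi hz hmin⟩

end Starring

theorem hasConstSignOn_simplexHull {l : E →ᵃ[ℝ] ℝ} {b : AffineBasis ι ℝ E}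
    (h : (∀ i, 0 ≤ l (b i)) ∨ ∀ i, l (b i) ≤ 0) : HasConstSignOn l (simplexHull b) :=
  h.imp
    (fun h => convexHull_min (forall_mem_range.2 h) ((convex_Ici (0 : ℝ)).affine_preimage l))
    fun h => convexHull_min (forall_mem_range.2 h) ((convex_Iic (0 : ℝ)).affine_preimage l)

theorem exists_mem_simplexHull_eq_zero {l : E →ᵃ[ℝ] ℝ} {b : AffineBasis ι ℝ E} {i j : ι}
    (hi : 0 < l (b i)) (hj : l (b j) < 0) :
    ∃ x ∈ simplexHull b, l x = 0 ∧ ∀ k, b.coord k x ≠ 0 → l (b k) ≠ 0 := by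
  have hzero : (0 : ℝ) ∈ l '' segment ℝ (b j) (b i) := by
    rw [image_segment, segment_eq_Icc (hj.trans hi).le]
    exact ⟨hj.le, hi.le⟩
  obtain ⟨x, hx, hlx⟩ := hzero
  have hsub : segment ℝ (b j) (b i) ⊆ simplexHull b :=
    (convex_convexHull ℝ _).segment_subset (subset_convexHull ℝ _ (mem_range_self j))
      (subset_convexHull ℝ _ (mem_range_self i))
  refine ⟨x, hsub hx, hlx, fun k hk hlk => hk ?_⟩
  obtain ⟨s, t, -, -, hst, rfl⟩ := hx
  have hki : k ≠ i := by rintro rfl; exact hi.ne' hlk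
  have hkj : k ≠ j := by rintro rfl; exact hj.ne hlk
  rw [Convex.combo_affine_apply hst, b.coord_apply_ne hki, b.coord_apply_ne hkj]
  simp

theorem hasDissection_hasConstSignOn [Finite ι] (l : E →ᵃ[ℝ] ℝ) (b : AffineBasis ι ℝ E) :
    HasDissection (simplexHull b)
      (fun c : AffineBasis ι ℝ E => HasConstSignOn l (simplexHull c)) := by
  classical
  have := Fintype.ofFinite ι
  -- Starring at a zero of `l` on an edge where `l` changes sign puts one more vertex on `l = 0`.
  induction hN : Finset.card {k | l (b k) ≠ 0} using Nat.strong_induction_on generalizing b with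
  | _ N ih =>
  by_cases hsign : (∀ i, 0 ≤ l (b i)) ∨ ∀ i, l (b i) ≤ 0
  · exact .of_self (hasConstSignOn_simplexHull hsign)
  push Not at hsign
  obtain ⟨⟨j, hj⟩, i, hi⟩ := hsign
  obtain ⟨x, hx, hlx, hsupp⟩ := exists_mem_simplexHull_eq_zero hi hj
  refine (HasDissection.starring
    (P := fun c => Finset.card {k | l (c k) ≠ 0} < N) hx fun m hm => ?_).bind
      fun c hc _ => ih _ hc c rfl
  rw [← hN]
  refine Finset.card_lt_card (Finset.ssubset_iff_of_subset (fun k => ?_) |>.2 ⟨m, ?_, ?_⟩)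
  · obtain rfl | hk := eq_or_ne k m
    · simp [hlx]
    · simp [hk]
  · simpa using hsupp m hm
  · simp [hlx]

theorem hasDissection_forall_hasConstSignOn [Finite ι] {κ : Type*} [Finite κ]
    (l : κ → E →ᵃ[ℝ] ℝ) (b : AffineBasis ι ℝ E) :
    HasDissection (simplexHull b)
      (fun c : AffineBasis ι ℝ E => ∀ k, HasConstSignOn (l k) (simplexHull c)) := by
  suffices ∀ s : Set κ, s.Finite → HasDissection (simplexHull b)
      (fun c : AffineBasis ι ℝ E => ∀ k ∈ s, HasConstSignOn (l k) (simplexHull c)) by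
    simpa using this univ finite_univ
  intro s hs
  induction s, hs using Set.Finite.induction_on with
  | empty => exact .of_self (by simp)
  | @insert k s _ _ ih =>
    refine ih.bind fun c hc _ => (hasDissection_hasConstSignOn (l k) c).bind fun d hd hdc => ?_
    exact .of_self (forall_mem_insert.2 ⟨hd, fun j hj => (hc j hj).mono hdc⟩)

variable [Fintype ι]

open scoped Pointwise in
theorem exists_subset_simplexHull [FiniteDimensional ℝ E]
    (hι : Fintype.card ι = finrank ℝ E + 1) {S : Set E} (hS : Bornology.IsBounded S) :
    ∃ b : AffineBasis ι ℝ E, S ⊆ simplexHull b := by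
  obtain ⟨b, hb, -⟩ := exists_mem_interior_convexHull_affineBasis (E := E) (x := 0) Filter.univ_mem
  have habs : Absorbs ℝ (convexHull ℝ (range b)) S :=
    (NormedSpace.isVonNBounded_iff ℝ).2 hS (mem_interior_iff_mem_nhds.1 hb)
  obtain ⟨r, hr, hrS⟩ := habs.exists_pos
  let u : ℝˣ := Units.mk0 r hr.ne'
  let e : Fin (finrank ℝ E + 1) ≃ ι := (Fintype.equivFinOfCardEq hι).symm
  refine ⟨(u • b).reindex e, (hrS r (le_abs_self r)).trans_eq ?_⟩
  have hrange : range ((u • b).reindex e) = r • range b := by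
    rw [AffineBasis.coe_reindex, e.symm.surjective.range_comp, AffineBasis.coe_smul]
    exact range_smul r b
  rw [simplexHull, hrange, convexHull_smul]

theorem hasDissection_polytope [FiniteDimensional ℝ E] (hι : Fintype.card ι = finrank ℝ E + 1)
    {κ : Type*} [Finite κ] {l : κ → E →ᵃ[ℝ] ℝ} (hbdd : Bornology.IsBounded {x | ∀ k, 0 ≤ l k x})
    {z : E} (hz : ∀ k, 0 < l k z) :
    HasDissection {x | ∀ k, 0 ≤ l k x} (fun _ : AffineBasis ι ℝ E => True) := by
  obtain ⟨b, hb⟩ := exists_subset_simplexHull hι hbdd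
  obtain ⟨T, hfin, hsign, hdisj, hunion⟩ := hasDissection_forall_hasConstSignOn l b
  set T' : Set (AffineBasis ι ℝ E) := {c ∈ T | simplexHull c ⊆ {x | ∀ k, 0 ≤ l k x}}
  have hfin' : T'.Finite := hfin.subset (sep_subset _ _)
  have hclosed : IsClosed (⋃ c ∈ T', simplexHull c) :=
    hfin'.isClosed_biUnion fun c _ => (finite_range c).isClosed_convexHull ℝ
  have hpos : {x | ∀ k, 0 < l k x} ⊆ ⋃ c ∈ T', simplexHull c := by
    intro x hx
    obtain ⟨c, hc, hxc⟩ := mem_iUnion₂.1 (hunion.ge (hb fun k => (hx k).le))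
    refine mem_biUnion (x := c) ⟨hc, fun w hw k => ?_⟩ hxc
    exact (hsign c hc k).elim (fun h => h w hw) fun h => absurd (h x hxc) (hx k).not_ge
  refine ⟨T', hfin', fun _ _ => trivial, hdisj.subset (sep_subset _ _),
    (iUnion₂_subset fun c hc => hc.2).antisymm fun x hx => ?_⟩
  have hseg : openSegment ℝ z x ⊆ {x | ∀ k, 0 < l k x} := by
    rintro _ ⟨s, t, hs, ht, hst, rfl⟩ k
    rw [Convex.combo_affine_apply hst]
    exact add_pos_of_pos_of_nonneg (mul_pos hs (hz k)) (mul_nonneg ht.le (hx k))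
  exact closure_minimal (hseg.trans hpos) hclosed
    (segment_subset_closure_openSegment (right_mem_segment ℝ z x))

end Dissection

section PiecewiseAffine

variable {ι E F : Type*} [NormedAddCommGroup E] [NormedSpace ℝ E] [AddCommGroup F] [Module ℝ F]

variable (ι) in
/-- `φ` is piecewise affine: every top-dimensional simplex, with vertices indexed by `ι`, has a
finite dissection into simplices on each of which `φ` is affine. This is vacuous unless `ι` has
`dim E + 1` elements. -/
def IsPiecewiseAffine (φ : E → F) : Prop :=
  ∀ b : AffineBasis ι ℝ E, HasDissection (simplexHull b)
    (fun c : AffineBasis ι ℝ E => ∃ g : E →ᵃ[ℝ] F, EqOn φ g (simplexHull c))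

theorem isPiecewiseAffine_affineMap (g : E →ᵃ[ℝ] F) : IsPiecewiseAffine ι g :=
  fun _ => .of_self ⟨g, eqOn_refl _ _⟩

theorem IsPiecewiseAffine.affineMap_comp {G : Type*} [AddCommGroup G] [Module ℝ G] {φ : E → F}
    (hφ : IsPiecewiseAffine ι φ) (h : F →ᵃ[ℝ] G) : IsPiecewiseAffine ι (h ∘ φ) :=
  fun b => (hφ b).mono fun _ ⟨g, hg⟩ => ⟨h.comp g, hg.comp_left⟩

variable [Finite ι]

theorem IsPiecewiseAffine.max {φ ψ : E → ℝ} (hφ : IsPiecewiseAffine ι φ)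
    (hψ : IsPiecewiseAffine ι ψ) : IsPiecewiseAffine ι (fun x => max (φ x) (ψ x)) := by
  intro b
  refine (hφ b).bind fun c ⟨g, hg⟩ _ => (hψ c).bind fun d ⟨h, hh⟩ hdc => ?_
  refine (hasDissection_hasConstSignOn (g - h) d).bind fun t ht htd => .of_self ?_
  have hgt : EqOn φ g (simplexHull t) := hg.mono (htd.trans hdc)
  have hht : EqOn ψ h (simplexHull t) := hh.mono htd
  rcases ht with hsign | hsign
  · refine ⟨g, fun x hx => ?_⟩
    simpa only [hgt hx, hht hx] using max_eq_left (sub_nonneg.1 (hsign x hx))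
  · refine ⟨h, fun x hx => ?_⟩
    simpa only [hgt hx, hht hx] using max_eq_right (sub_nonpos.1 (hsign x hx))

theorem isPiecewiseAffine_dist_pi {κ : Type*} [Fintype κ] (y : κ → ℝ) :
    IsPiecewiseAffine ι (fun x => dist x y) := by
  suffices ∀ s : Finset κ,
      IsPiecewiseAffine ι (fun x : κ → ℝ => ((s.sup fun i => nndist (x i) (y i) : ℝ≥0) : ℝ)) by
    simpa only [dist_pi_def] using this Finset.univ
  intro s
  induction s using Finset.cons_induction with
  | empty =>
    simp only [Finset.sup_empty, bot_eq_zero', NNReal.coe_zero]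
    exact isPiecewiseAffine_affineMap (AffineMap.const ℝ (κ → ℝ) (0 : ℝ))
  | cons i s _ ih =>
    let l : (κ → ℝ) →ᵃ[ℝ] ℝ := (AffineMap.proj i : (κ → ℝ) →ᵃ[ℝ] ℝ) - AffineMap.const ℝ _ (y i)
    convert ((isPiecewiseAffine_affineMap l).max (isPiecewiseAffine_affineMap (-l))).max ih
      using 2 with x
    simp [l, Real.dist_eq, abs_eq_max_neg]

end PiecewiseAffine

section Box

variable {ι κ : Type*} [Fintype ι] [Fintype κ]

theorem hasDissection_Icc (hι : Fintype.card ι = Fintype.card κ + 1) {a b : κ → ℝ}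
    (hab : ∀ i, a i < b i) :
    HasDissection (Icc a b) (fun _ : AffineBasis ι ℝ (κ → ℝ) => True) := by
  let l : κ ⊕ κ → (κ → ℝ) →ᵃ[ℝ] ℝ :=
    Sum.elim (fun i => (AffineMap.proj i : (κ → ℝ) →ᵃ[ℝ] ℝ) - AffineMap.const ℝ _ (a i))
      fun i => AffineMap.const ℝ _ (b i) - (AffineMap.proj i : (κ → ℝ) →ᵃ[ℝ] ℝ)
  have hIcc : Icc a b = {x | ∀ k, 0 ≤ l k x} := by
    ext x
    simp [l, Pi.le_def]
  have hmid : ∀ k, 0 < l k ((2⁻¹ : ℝ) • (a + b)) := by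
    rintro (i | i) <;> simp only [l, Sum.elim_inl, Sum.elim_inr, AffineMap.coe_sub,
      Pi.sub_apply, AffineMap.proj_apply, AffineMap.const_apply, Pi.smul_apply, Pi.add_apply,
      smul_eq_mul] <;> linarith [hab i]
  rw [hIcc]
  exact hasDissection_polytope (by simpa using hι) (hIcc ▸ Metric.isBounded_Icc a b) hmid

end Box

section Tent

variable {X : Type*} [PseudoMetricSpace X] {y x : X} {s : ℝ≥0} {ε : ℝ}

/-- The tent of slope `s` and radius `ε` over `y`: a piecewise affine bump function when balls are
cubes. -/
def tent (s : ℝ≥0) (ε : ℝ) (y x : X) : ℝ := s * max 0 (ε - dist x y)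

theorem tent_self (hε : 0 ≤ ε) : tent s ε y y = s * ε := by simp [tent, hε]

theorem tent_eq_zero_of_le_dist (h : ε ≤ dist x y) : tent s ε y x = 0 := by simp [tent, h]

theorem lipschitzWith_tent : LipschitzWith s (tent s ε y) := by
  refine LipschitzWith.of_dist_le_mul fun a b => ?_
  rw [tent, tent, Real.dist_eq, ← mul_sub, abs_mul, NNReal.abs_eq]
  gcongr
  calc |max 0 (ε - dist a y) - max 0 (ε - dist b y)|
      ≤ |ε - dist a y - (ε - dist b y)| := by
        simpa only [max_comm (0 : ℝ)] using abs_max_sub_max_le_abs _ _ (0 : ℝ)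
    _ = |dist b y - dist a y| := by rw [sub_sub_sub_cancel_left]
    _ ≤ dist a b := by
        rw [dist_comm a b]
        exact abs_dist_sub_le b a y

theorem isPiecewiseAffine_tent {ι κ : Type*} [Finite ι] [Fintype κ] (s : ℝ≥0) (ε : ℝ)
    (y : κ → ℝ) : IsPiecewiseAffine ι (tent s ε y) := by
  let l : ℝ →ᵃ[ℝ] ℝ := AffineMap.const ℝ ℝ ε - AffineMap.id ℝ ℝ
  have hcone := (isPiecewiseAffine_dist_pi (ι := ι) y).affineMap_comp l
  exact ((isPiecewiseAffine_affineMap (AffineMap.const ℝ _ 0)).max hcone).affineMap_comp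
    (LinearMap.mulLeft ℝ (s : ℝ)).toAffineMap

end Tent

section Shear

variable {E : Type*} [NormedAddCommGroup E] [NormedSpace ℝ E] {K : ℝ≥0}

theorem norm_linear_apply_le_of_lipschitzWith {F : Type*} [NormedAddCommGroup F]
    [NormedSpace ℝ F] {φ : E → F} (hφ : LipschitzWith K φ) {S : Set E}
    (hS : (interior S).Nonempty) {g : E →ᵃ[ℝ] F} (hg : EqOn φ g S) (v : E) :
    ‖g.linear v‖ ≤ K * ‖v‖ := by
  obtain ⟨x, hx⟩ := hS
  have hderiv : HasLineDerivAt ℝ g (g.linear v) x v := by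
    have hline : ∀ t : ℝ, g (x + t • v) = t • g.linear v + g x := fun t => by
      rw [add_comm, ← vadd_eq_add, g.map_vadd, map_smul, vadd_eq_add]
    simpa [HasLineDerivAt, hline] using
      ((hasDerivAt_id (0 : ℝ)).smul_const (g.linear v)).add_const (g x)
  have hnear : φ =ᶠ[nhds x] g := hg.eventuallyEq_of_mem (mem_interior_iff_mem_nhds.1 hx)
  exact (hderiv.congr_of_eventuallyEq hnear).le_of_lipschitz hφ

variable {R V : Type*} [CommRing R] [AddCommGroup V] [Module R V]

/-- The shear `x ↦ x + g x • v` in the direction `v`. -/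
def affineShear (g : V →ᵃ[R] R) (v : V) : V →ᵃ[R] V :=
  AffineMap.id R V + (LinearMap.toSpanSingleton R V v).toAffineMap.comp g

theorem affineShear_apply (g : V →ᵃ[R] R) (v x : V) : affineShear g v x = x + g x • v := by
  simp [affineShear]

theorem det_linear_affineShear [Module.Free R V] [Module.Finite R V] (g : V →ᵃ[R] R) (v : V) :
    LinearMap.det (affineShear g v).linear = 1 + g.linear v := by
  have hlinear : (affineShear g v).linear = LinearMap.transvection g.linear v := by
    ext x
    simp [affineShear, LinearMap.transvection.apply]
  rw [hlinear, LinearMap.transvection.det]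

theorem approximatesLinearOn_id_add {u : E → E} (hu : LipschitzWith K u) :
    ApproximatesLinearOn (fun x => x + u x) (ContinuousLinearEquiv.refl ℝ E : E →L[ℝ] E) univ K :=
  fun x _ y _ => by simpa [add_sub_add_comm] using hu.norm_sub_le x y

theorem lt_inv_nnnorm_refl (hK : K < 1) :
    Subsingleton E ∨ K < ‖((ContinuousLinearEquiv.refl ℝ E).symm : E →L[ℝ] E)‖₊⁻¹ := by
  rcases subsingleton_or_nontrivial E with hE | hE
  · exact .inl hE
  · exact .inr (by simpa using hK)

/-- The homeomorphism `x ↦ x + u x` for a contraction `u`. -/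
noncomputable def idAddHomeomorph [CompleteSpace E] {u : E → E} (hu : LipschitzWith K u)
    (hK : K < 1) : E ≃ₜ E :=
  (approximatesLinearOn_id_add hu).toHomeomorph _ (lt_inv_nnnorm_refl hK)

theorem idAddHomeomorph_apply [CompleteSpace E] {u : E → E} (hu : LipschitzWith K u)
    (hK : K < 1) (x : E) : idAddHomeomorph hu hK x = x + u x := rfl

end Shear

section BoxShear

variable {κ : Type*} [Fintype κ] {a b : κ → ℝ} {e : κ} {φ : (κ → ℝ) → ℝ}

theorem abs_le_abs_sub_of_apply_update_eq_zero [DecidableEq κ] (hφ : LipschitzWith 1 φ)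
    {x : κ → ℝ} {r : ℝ} (hr : φ (Function.update x e r) = 0) : |φ x| ≤ |x e - r| := by
  calc |φ x| = dist (φ x) (φ (Function.update x e r)) := by
        rw [hr, dist_zero_right, Real.norm_eq_abs]
    _ ≤ dist x (Function.update x e r) := by simpa using hφ.dist_le_mul x _
    _ ≤ |x e - r| := (dist_pi_le_iff (abs_nonneg _)).2 fun i => by
      obtain rfl | hi := eq_or_ne i e
      · simp [Real.dist_eq]
      · simp [hi]

theorem add_apply_mem_Icc_iff (hφ : LipschitzWith 1 φ)
    (h0 : ∀ x, x e ∉ Ioo (a e) (b e) → φ x = 0) (x : κ → ℝ) :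
    x e + φ x ∈ Icc (a e) (b e) ↔ x e ∈ Icc (a e) (b e) := by
  classical
  by_cases hx : x e ∈ Ioo (a e) (b e)
  · have hbound : ∀ r ∉ Ioo (a e) (b e), |φ x| ≤ |x e - r| := fun r hr =>
      abs_le_abs_sub_of_apply_update_eq_zero hφ (h0 _ (by simpa using hr))
    have hlower : |φ x| ≤ x e - a e :=
      (hbound (a e) left_notMem_Ioo).trans_eq (abs_of_pos (sub_pos.2 hx.1))
    have hupper : |φ x| ≤ b e - x e :=
      (hbound (b e) right_notMem_Ioo).trans_eq (by rw [abs_of_neg (sub_neg.2 hx.2), neg_sub])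
    refine iff_of_true ⟨?_, ?_⟩ (Ioo_subset_Icc_self hx)
    · linarith [neg_le_of_abs_le hlower]
    · linarith [le_of_abs_le hupper]
  · rw [h0 x hx, add_zero]

variable [DecidableEq κ]

theorem add_single_mem_Icc_iff (hφ : LipschitzWith 1 φ)
    (h0 : ∀ x, x e ∉ Ioo (a e) (b e) → φ x = 0) (x : κ → ℝ) :
    x + Pi.single e (φ x) ∈ Icc a b ↔ x ∈ Icc a b := by
  simp only [← pi_univ_Icc, mem_univ_pi]
  refine forall_congr' fun i => ?_
  obtain rfl | hi := eq_or_ne i e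
  · simpa using add_apply_mem_Icc_iff hφ h0 x
  · simp [hi]

variable {K : ℝ≥0}

/-- The homeomorphism `x ↦ x + φ x • e` of a box, sliding points along the coordinate direction
`e`, for a contraction `φ` that vanishes where the `e`-coordinate leaves the box. -/
noncomputable def boxShear (hφ : LipschitzWith K φ) (hK : K < 1)
    (h0 : ∀ x, x e ∉ Ioo (a e) (b e) → φ x = 0) : Icc a b ≃ₜ Icc a b :=
  (idAddHomeomorph (u := fun x => Pi.single e (φ x))
    ((Isometry.single e).lipschitz.comp hφ |>.weaken (one_mul K).le) hK).subtype fun x =>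
      (add_single_mem_Icc_iff (hφ.weaken hK.le) h0 x).symm

variable (hφ : LipschitzWith K φ) (hK : K < 1) (h0 : ∀ x, x e ∉ Ioo (a e) (b e) → φ x = 0)

theorem coe_boxShear (x : Icc a b) :
    (boxShear hφ hK h0 x : κ → ℝ) = (x : κ → ℝ) + Pi.single e (φ x) :=
  idAddHomeomorph_apply _ hK _

theorem hasDissection_boxShear {ι : Type*} [Fintype ι] (hι : Fintype.card ι = Fintype.card κ + 1)
    (hab : ∀ i, a i < b i) (hPA : IsPiecewiseAffine ι φ) :
    HasDissection (Icc a b) fun c : AffineBasis ι ℝ (κ → ℝ) =>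
      ∃ A : (κ → ℝ) →ᵃ[ℝ] (κ → ℝ), 0 < LinearMap.det A.linear ∧
        ∀ x : Icc a b, ↑x ∈ simplexHull c → (boxShear hφ hK h0 x : κ → ℝ) = A x := by
  refine ((hasDissection_Icc hι hab).bind fun c _ _ => hPA c).mono fun c ⟨g, hg⟩ => ?_
  refine ⟨affineShear g (Pi.single e 1), ?_, fun x hx => ?_⟩
  · have hint : (interior (simplexHull c)).Nonempty :=
      interior_convexHull_nonempty_iff_affineSpan_eq_top.2 c.tot
    have hslope := norm_linear_apply_le_of_lipschitzWith hφ hint hg (Pi.single e 1)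
    rw [Pi.norm_single, norm_one, mul_one] at hslope
    rw [det_linear_affineShear]
    linarith [neg_le_of_abs_le hslope, show (K : ℝ) < 1 from hK]
  · rw [coe_boxShear, affineShear_apply, ← hg hx, ← Pi.single_smul', smul_eq_mul, mul_one]

end BoxShear

theorem min_sub_le_dist_of_notMem_Ioo {a b r : ℝ} (hr : r ∉ Ioo a b) (t : ℝ) :
    min (t - a) (b - t) ≤ dist r t := by
  rw [Real.dist_eq]
  rcases le_or_gt r a with hra | har
  · exact (min_le_left _ _).trans (by linarith [neg_le_abs (r - t)])
  · have hbr : b ≤ r := not_lt.1 fun hrb => hr ⟨har, hrb⟩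
    exact (min_le_right _ _).trans (by linarith [le_abs_self (r - t)])

section Cube

variable {n : ℕ}

theorem isPLCubeHomeo_of_hasDissection {f : Cube n ≃ₜ Cube n}
    (hf : HasDissection (Icc 0 1) fun c : AffineBasis (Fin (n + 1)) ℝ (Fin n → ℝ) =>
      ∃ A : (Fin n → ℝ) →ᵃ[ℝ] (Fin n → ℝ), 0 < LinearMap.det A.linear ∧
        ∀ x : Cube n, ↑x ∈ simplexHull c → (f x : Fin n → ℝ) = A x) :
    IsPLCubeHomeo f := by
  obtain ⟨T, hfin, hA, hdisj, hunion⟩ := hf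
  choose! A hdet hfA using hA
  have := hfin.to_subtype
  obtain ⟨k, ⟨index⟩⟩ := Finite.exists_equiv_fin T
  let c : Fin k → AffineBasis (Fin (n + 1)) ℝ (Fin n → ℝ) := fun i => index.symm i
  have hc : ∀ i, c i ∈ T := fun i => (index.symm i).2
  refine ⟨k, fun i => c i, fun i => A (c i), fun i => (c i).ind, fun i j hij => ?_, ?_,
    fun i => hdet _ (hc i), fun i => hfA _ (hc i)⟩
  · have hcij : c i ≠ c j := fun h => hij (index.symm.injective (Subtype.ext h))
    exact (hdisj (hc i) (hc j) hcij).inter_eq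
  · rw [← hunion, biUnion_eq_iUnion]
    exact index.symm.surjective.iUnion_comp fun b : T => simplexHull b.1

theorem image_vertLine {f : Cube n ≃ₜ Cube n}
    (hf : ∀ (x : Cube n) (i : Fin n), (i : ℕ) + 1 < n → (f x : Fin n → ℝ) i = (x : Fin n → ℝ) i)
    (c : Fin n → ℝ) : f '' VertLine c = VertLine c := by
  have hpre : f ⁻¹' VertLine c = VertLine c := by
    ext x
    exact forall₂_congr fun i hi => by rw [hf x i hi]
  conv_lhs => rw [← hpre]
  exact image_preimage_eq _ f.surjective

theorem exists_isPLCubeHomeo_coord_eq_add {U : Set (Cube n)} (hU : IsOpen U) {y : Cube n}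
    (hy : y ∈ U) {e : Fin n} (he : (y : Fin n → ℝ) e ∈ Ioo (0 : ℝ) 1) :
    ∃ ε > 0, ∀ h ∈ Ioo 0 ε, ∃ f : Cube n ≃ₜ Cube n, IsPLCubeHomeo f ∧
      (∀ x : Cube n, ∀ i ≠ e, (f x : Fin n → ℝ) i = (x : Fin n → ℝ) i) ∧
      (∀ w ∉ U, f w = w) ∧ (f y : Fin n → ℝ) e = (y : Fin n → ℝ) e + h := by
  obtain ⟨δ, hδ, hball⟩ := Metric.isOpen_iff.1 hU y hy
  set t : ℝ := (y : Fin n → ℝ) e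
  refine ⟨min δ (min t (1 - t)), lt_min hδ (lt_min he.1 (sub_pos.2 he.2)), fun h hh => ?_⟩
  set ε := min δ (min t (1 - t))
  have hε0 : 0 < ε := hh.1.trans hh.2
  let s : ℝ≥0 := ⟨h / ε, div_nonneg hh.1.le hε0.le⟩
  have hs : s < 1 := (div_lt_one hε0).2 hh.2
  have h0 : ∀ x : Fin n → ℝ, x e ∉ Ioo (0 : ℝ) 1 → tent s ε (y : Fin n → ℝ) x = 0 := by
    intro x hx
    refine tent_eq_zero_of_le_dist (le_trans ?_ (dist_le_pi_dist x y e))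
    exact (min_le_right _ _).trans (by simpa using min_sub_le_dist_of_notMem_Ioo hx t)
  refine ⟨boxShear (lipschitzWith_tent (s := s) (ε := ε) (y := (y : Fin n → ℝ))) hs h0,
    isPLCubeHomeo_of_hasDissection
      (hasDissection_boxShear _ _ _ (by simp) (by simp) (isPiecewiseAffine_tent _ _ _)),
    fun x i hi => ?_, fun w hw => Subtype.ext ?_, ?_⟩
  · simp [coe_boxShear, hi]
  · have hdist : ε ≤ dist (w : Fin n → ℝ) y :=
      (min_le_left _ _).trans (not_lt.1 fun hlt => hw (hball hlt))
    rw [coe_boxShear, tent_eq_zero_of_le_dist hdist, Pi.single_zero, add_zero]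
  · rw [coe_boxShear, tent_self hε0.le, Pi.add_apply, Pi.single_eq_same]
    exact congrArg _ (div_mul_cancel₀ h hε0.ne')

end Cube

/-- For every `n ≥ 1`, the group `PL(Iⁿ, F)` has the local perturbations property: for any
nonempty open `U ⊆ [0,1]ⁿ` and point `y = (x, t) ∈ U` with vertical coordinate
`t ∈ (0,1)`, the set of images of `y` under vertical-line-preserving piecewise linear
homeomorphisms supported in `U` is uncountable. -/
theorem plCubeVert_local_perturbations (n : ℕ) (hn : 1 ≤ n)
    (U : Set (Cube n)) (hU : IsOpen U) (hUne : U.Nonempty)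
    (y : Cube n) (hy : y ∈ U)
    (ht : (y : Fin n → ℝ) ⟨n - 1, by omega⟩ ∈ Set.Ioo (0 : ℝ) 1) :
    ¬ Set.Countable {z : Cube n | ∃ f : Homeomorph (Cube n) (Cube n),
        IsPLCubeHomeo f ∧ (∀ c : Fin n → ℝ, ⇑f '' VertLine c = VertLine c) ∧
        (∀ w ∉ U, f w = w) ∧ f y = z} := by
  obtain ⟨ε, hε, hslide⟩ := exists_isPLCubeHomeo_coord_eq_add hU hy ht
  intro hcount
  set e : Fin n := ⟨n - 1, by omega⟩
  set t : ℝ := (y : Fin n → ℝ) e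
  have hIoo : (Ioo t (t + ε)).Countable := by
    refine (hcount.image fun z : Cube n => (z : Fin n → ℝ) e).mono fun r hr => ?_
    obtain ⟨f, hPL, hcoord, hfix, hfy⟩ := hslide (r - t) ⟨sub_pos.2 hr.1, by linarith [hr.2]⟩
    have hvert : ∀ c, f '' VertLine c = VertLine c := image_vertLine fun x i hi =>
      hcoord x i fun hie => by
        have : (i : ℕ) = n - 1 := congrArg Fin.val hie
        omega
    exact ⟨f y, ⟨f, hPL, hvert, hfix, rfl⟩, hfy.trans (add_sub_cancel t r)⟩
  linarith [Cardinal.Real.Ioo_countable_iff.1 hIoo]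
end
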